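/- arXiv:1411.2100 — 2 statements merged into one kernel-verified Lean document; each statement's English description precedes it below -/
import Mathlib

section
/- Let A, B ∈ 𝐍 with ‖A Ω‖ = ‖B Ω‖ = 1. Then the transition probability ω_A · ω_B := |⟨A Ω, B Ω⟩|² satisfies ω_A · ω_B ≤ 1 − (1/4) ‖ω_A − ω_B‖², where ‖ω_A − ω_B‖ = sup{|ω_A(C) − ω_B(C)| : C ∈ 𝐍, ‖C‖ ≤ 1}. -/
open scoped ComplexInnerProductSpace

/-!
Polarization gives `2 (⟪x, T x⟫ - ⟪y, T y⟫) = ⟪x + y, T (x - y)⟫ + ⟪x - y, T (x + y)⟫`, so the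
values at `T` of the functionals of `x` and `y` differ by at most `‖T‖ ‖x + y‖ ‖x - y‖`, where
`(‖x + y‖ ‖x - y‖)² = (‖x‖² + ‖y‖²)² - 4 (re ⟪x, y⟫)²`. Multiplying `y` by a phase does not affect
its functional and makes `⟪x, y⟫` real and nonnegative, which replaces `re ⟪x, y⟫` by `|⟪x, y⟫|`.
For unit vectors the bound becomes `4 (1 - |⟪x, y⟫|²)` when `‖T‖ ≤ 1`.
-/

section VectorFunctionals

open scoped InnerProductSpace

variable {𝕜 E : Type*} [RCLike 𝕜] [SeminormedAddCommGroup E] [InnerProductSpace 𝕜 E]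

theorem two_mul_inner_map_self_sub_inner_map_self {F : Type*} [FunLike F E E]
    [AddMonoidHomClass F E E] (T : F) (x y : E) :
    2 * (⟪x, T x⟫_𝕜 - ⟪y, T y⟫_𝕜) = ⟪x + y, T (x - y)⟫_𝕜 + ⟪x - y, T (x + y)⟫_𝕜 := by
  simp only [map_add, map_sub, inner_add_left, inner_sub_left, inner_add_right, inner_sub_right]
  ring

theorem norm_inner_map_le (T : E →L[𝕜] E) (x y : E) : ‖⟪x, T y⟫_𝕜‖ ≤ ‖T‖ * (‖x‖ * ‖y‖) :=
  calc ‖⟪x, T y⟫_𝕜‖ ≤ ‖x‖ * ‖T y‖ := norm_inner_le_norm x (T y)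
    _ ≤ ‖x‖ * (‖T‖ * ‖y‖) := by gcongr; exact T.le_opNorm y
    _ = ‖T‖ * (‖x‖ * ‖y‖) := by ring

theorem norm_inner_map_self_sub_inner_map_self_le (T : E →L[𝕜] E) (x y : E) :
    ‖⟪x, T x⟫_𝕜 - ⟪y, T y⟫_𝕜‖ ≤ ‖T‖ * (‖x + y‖ * ‖x - y‖) := by
  refine le_of_mul_le_mul_left ?_ (zero_lt_two' ℝ)
  calc 2 * ‖⟪x, T x⟫_𝕜 - ⟪y, T y⟫_𝕜‖
      = ‖⟪x + y, T (x - y)⟫_𝕜 + ⟪x - y, T (x + y)⟫_𝕜‖ := by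
        rw [← two_mul_inner_map_self_sub_inner_map_self, norm_mul, RCLike.norm_ofNat]
    _ ≤ ‖T‖ * (‖x + y‖ * ‖x - y‖) + ‖T‖ * (‖x - y‖ * ‖x + y‖) :=
        norm_add_le_of_le (norm_inner_map_le T _ _) (norm_inner_map_le T _ _)
    _ = 2 * (‖T‖ * (‖x + y‖ * ‖x - y‖)) := by ring

variable (𝕜) in
theorem sq_norm_add_mul_norm_sub (x y : E) :
    (‖x + y‖ * ‖x - y‖) ^ 2 = (‖x‖ ^ 2 + ‖y‖ ^ 2) ^ 2 - 4 * RCLike.re ⟪x, y⟫_𝕜 ^ 2 := by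
  rw [mul_pow, norm_add_sq (𝕜 := 𝕜), norm_sub_sq (𝕜 := 𝕜)]
  ring

theorem inner_smul_map_smul_of_norm_eq_one {c : 𝕜} (hc : ‖c‖ = 1) (T : E →ₗ[𝕜] E) (x : E) :
    ⟪c • x, T (c • x)⟫_𝕜 = ⟪x, T x⟫_𝕜 := by
  rw [map_smul, inner_smul_left, inner_smul_right, ← mul_assoc, RCLike.conj_mul, hc,
    RCLike.ofReal_one, one_pow, one_mul]

theorem sq_norm_inner_map_self_sub_inner_map_self_le (T : E →L[𝕜] E) (x y : E) :
    ‖⟪x, T x⟫_𝕜 - ⟪y, T y⟫_𝕜‖ ^ 2 ≤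
      ‖T‖ ^ 2 * ((‖x‖ ^ 2 + ‖y‖ ^ 2) ^ 2 - 4 * ‖⟪x, y⟫_𝕜‖ ^ 2) := by
  obtain ⟨c, hc, h_phase⟩ := RCLike.exists_norm_eq_mul_self ⟪x, y⟫_𝕜
  have h_functional : ⟪c • y, T (c • y)⟫_𝕜 = ⟪y, T y⟫_𝕜 :=
    inner_smul_map_smul_of_norm_eq_one hc T.toLinearMap y
  have h_norm : ‖c • y‖ = ‖y‖ := by rw [norm_smul, hc, one_mul]
  have h_re : RCLike.re ⟪x, c • y⟫_𝕜 = ‖⟪x, y⟫_𝕜‖ := by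
    rw [inner_smul_right, ← h_phase, RCLike.ofReal_re]
  calc ‖⟪x, T x⟫_𝕜 - ⟪y, T y⟫_𝕜‖ ^ 2
      = ‖⟪x, T x⟫_𝕜 - ⟪c • y, T (c • y)⟫_𝕜‖ ^ 2 := by rw [h_functional]
    _ ≤ (‖T‖ * (‖x + c • y‖ * ‖x - c • y‖)) ^ 2 := by
        gcongr
        exact norm_inner_map_self_sub_inner_map_self_le T x (c • y)
    _ = ‖T‖ ^ 2 * ((‖x‖ ^ 2 + ‖y‖ ^ 2) ^ 2 - 4 * ‖⟪x, y⟫_𝕜‖ ^ 2) := by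
        rw [mul_pow, sq_norm_add_mul_norm_sub 𝕜, h_norm, h_re]

variable (𝕜) in
theorem four_mul_sq_norm_inner_le (x y : E) :
    4 * ‖⟪x, y⟫_𝕜‖ ^ 2 ≤ (‖x‖ ^ 2 + ‖y‖ ^ 2) ^ 2 :=
  calc 4 * ‖⟪x, y⟫_𝕜‖ ^ 2 ≤ 4 * (‖x‖ * ‖y‖) ^ 2 := by gcongr; exact norm_inner_le_norm x y
    _ = 4 * ‖x‖ ^ 2 * ‖y‖ ^ 2 := by ring
    _ ≤ (‖x‖ ^ 2 + ‖y‖ ^ 2) ^ 2 := four_mul_le_sq_add _ _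

theorem sq_sSup_norm_inner_map_self_sub_inner_map_self_le (S : Set (E →L[𝕜] E)) (x y : E) :
    sSup {r : ℝ | ∃ C ∈ S, ‖C‖ ≤ 1 ∧ r = ‖⟪x, C x⟫_𝕜 - ⟪y, C y⟫_𝕜‖} ^ 2 ≤
      (‖x‖ ^ 2 + ‖y‖ ^ 2) ^ 2 - 4 * ‖⟪x, y⟫_𝕜‖ ^ 2 := by
  set D := (‖x‖ ^ 2 + ‖y‖ ^ 2) ^ 2 - 4 * ‖⟪x, y⟫_𝕜‖ ^ 2
  have hD : 0 ≤ D := sub_nonneg.2 (four_mul_sq_norm_inner_le 𝕜 x y)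
  refine (Real.le_sqrt (Real.sSup_nonneg ?_) hD).1 (Real.sSup_le ?_ (Real.sqrt_nonneg D))
  · rintro r ⟨C, -, -, rfl⟩
    exact norm_nonneg _
  · rintro r ⟨C, -, hC, rfl⟩
    apply Real.le_sqrt_of_sq_le
    calc ‖⟪x, C x⟫_𝕜 - ⟪y, C y⟫_𝕜‖ ^ 2 ≤ ‖C‖ ^ 2 * D :=
          sq_norm_inner_map_self_sub_inner_map_self_le C x y
      _ ≤ D := mul_le_of_le_one_left hD (pow_le_one₀ (norm_nonneg C) hC)

theorem stmt_5_general (S : Set (E →L[𝕜] E)) (x y : E) :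
    ‖⟪x, y⟫_𝕜‖ ^ 2 ≤ ((‖x‖ ^ 2 + ‖y‖ ^ 2) / 2) ^ 2 - (1 / 4) *
      (sSup {r : ℝ | ∃ C ∈ S, ‖C‖ ≤ 1 ∧ r = ‖⟪x, C x⟫_𝕜 - ⟪y, C y⟫_𝕜‖}) ^ 2 := by
  linarith [sq_sSup_norm_inner_map_self_sub_inner_map_self_le S x y]

end VectorFunctionals

/-- Proposition 3.1(ii), inequality. For `A, B ∈ 𝐍` with
`‖AΩ‖ = ‖BΩ‖ = 1`, the transition probability `ω_A · ω_B = |⟨AΩ, BΩ⟩|²` satisfies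
`ω_A · ω_B ≤ 1 − (1/4) ‖ω_A − ω_B‖²`, where the norm is the one induced by `𝐍`. -/
theorem stmt_5 {H : Type*} [NormedAddCommGroup H] [InnerProductSpace ℂ H] [CompleteSpace H]
    [TopologicalSpace.SeparableSpace H]
    (N : ℕ → VonNeumannAlgebra H)
    (hmono : ∀ n, (N n : Set (H →L[ℂ] H)) ⊆ (N (n + 1) : Set (H →L[ℂ] H)))
    (Ω : H) (hΩ : ‖Ω‖ = 1)
    (A B : H →L[ℂ] H)
    (hA : A ∈ ⋃ n, (N n : Set (H →L[ℂ] H)))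
    (hB : B ∈ ⋃ n, (N n : Set (H →L[ℂ] H)))
    (hAnorm : ‖A Ω‖ = 1) (hBnorm : ‖B Ω‖ = 1) :
    ‖⟪A Ω, B Ω⟫‖ ^ 2 ≤ 1 - (1 / 4) *
      (sSup {r : ℝ | ∃ C ∈ ⋃ n, (N n : Set (H →L[ℂ] H)), ‖C‖ ≤ 1 ∧
        r = ‖⟪A Ω, C (A Ω)⟫ - ⟪B Ω, C (B Ω)⟫‖}) ^ 2 := by
  simpa [hAnorm, hBnorm] using
    stmt_5_general (⋃ n, (N n : Set (H →L[ℂ] H))) (A Ω) (B Ω)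
end

section
/- Let N ⊆ B(H) be a unital *-subalgebra, let Ω ∈ H be a unit vector with {A Ω : A ∈ N} dense in H, and let V ∈ B(H) be a unitary operator that commutes with every element of N and is not a scalar multiple of the identity. Then |⟨Ω, V Ω⟩| < 1, and there exists a sequence A_m ∈ N with ‖A_m Ω‖ = 1 such that ‖ω_{A_m} − ω‖ → 0 while lim_m |⟨Ω, A_m Ω⟩| = |⟨Ω, V Ω⟩| < 1. In particular, the equality |⟨A Ω, B Ω⟩|² = 1 − (1/4)‖ω_A − ω_B‖² fails for some pairs of states when the commutant of N is nontrivial. -/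
open scoped ComplexInnerProductSpace

open Filter Topology

/-! For an isometry `V` commuting with `N`, the vectors `VΩ` and `Ω` induce the same state on `N`.
Cyclicity yields unit vectors `A_m Ω` converging to `VΩ`, so the states `ω_{A_m}` converge in norm
to `ω`, while `⟨Ω, A_m Ω⟩` tends to `⟨Ω, VΩ⟩`. Equality `|⟨Ω, VΩ⟩| = 1` in Cauchy–Schwarz would make
`Ω` an eigenvector of `V`, and an operator commuting with `N` is determined by its value at `Ω`. -/

section Normalization

open Metric

variable {𝕜 E : Type*} [RCLike 𝕜] [NormedAddCommGroup E] [NormedSpace 𝕜 E]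

theorem mem_closure_inter_sphere_norm {K : Submodule 𝕜 E} {x : E} (hx : x ∈ closure (K : Set E)) :
    x ∈ closure ((K : Set E) ∩ sphere 0 ‖x‖) := by
  obtain rfl | hx0 := eq_or_ne x 0
  · exact subset_closure ⟨K.zero_mem, by simp⟩
  let rescale : E → E := fun y => ((‖x‖ / ‖y‖ : ℝ) : 𝕜) • y
  have rescale_self : rescale x = x := by simp [rescale, hx0]
  have rescale_cont : ContinuousAt rescale x :=
    (RCLike.continuous_ofReal.continuousAt.comp
      (continuousAt_const.div continuous_norm.continuousAt (norm_ne_zero_iff.mpr hx0))).smul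
        continuousAt_id
  have rescale_mem : rescale '' ({0}ᶜ ∩ K) ⊆ (K : Set E) ∩ sphere 0 ‖x‖ := by
    rintro _ ⟨y, ⟨hy0, hyK⟩, rfl⟩
    have hy : ‖y‖ ≠ 0 := norm_ne_zero_iff.mpr hy0
    exact ⟨K.smul_mem _ hyK, by simp [rescale, norm_smul, hy]⟩
  have hx' : x ∈ closure ({0}ᶜ ∩ (K : Set E)) := isOpen_compl_singleton.inter_closure ⟨hx0, hx⟩
  exact closure_mono rescale_mem (rescale_self ▸ mem_closure_image rescale_cont hx')

end Normalization

section VectorFunctional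

open scoped InnerProductSpace

open Metric

variable {𝕜 E : Type*} [RCLike 𝕜] [SeminormedAddCommGroup E] [InnerProductSpace 𝕜 E]

theorem norm_inner_apply_self_sub_le (C : E →L[𝕜] E) (x y : E) :
    ‖⟪x, C x⟫_𝕜 - ⟪y, C y⟫_𝕜‖ ≤ ‖C‖ * (‖x‖ + ‖y‖) * ‖x - y‖ := by
  calc ‖⟪x, C x⟫_𝕜 - ⟪y, C y⟫_𝕜‖
      = ‖⟪x, C (x - y)⟫_𝕜 + ⟪x - y, C y⟫_𝕜‖ := by
        rw [map_sub, inner_sub_right, inner_sub_left, sub_add_sub_cancel]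
    _ ≤ ‖x‖ * ‖C (x - y)‖ + ‖x - y‖ * ‖C y‖ :=
        norm_add_le_of_le (norm_inner_le_norm _ _) (norm_inner_le_norm _ _)
    _ ≤ ‖x‖ * (‖C‖ * ‖x - y‖) + ‖x - y‖ * (‖C‖ * ‖y‖) := by
        gcongr <;> exact C.le_opNorm _
    _ = ‖C‖ * (‖x‖ + ‖y‖) * ‖x - y‖ := by ring

theorem tendstoUniformlyOn_inner_apply_self {ι : Type*} {l : Filter ι} {u : ι → E} {y : E}
    (hu : Tendsto u l (𝓝 y)) :
    TendstoUniformlyOn (fun i (C : E →L[𝕜] E) => ⟪u i, C (u i)⟫_𝕜) (fun C => ⟪y, C y⟫_𝕜) l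
      (closedBall 0 1) := by
  have bound_tendsto : Tendsto (fun i => (‖u i‖ + ‖y‖) * ‖u i - y‖) l (𝓝 0) := by
    simpa using (hu.norm.add_const ‖y‖).mul (tendsto_iff_norm_sub_tendsto_zero.mp hu)
  refine Metric.tendstoUniformlyOn_iff.mpr fun ε hε => ?_
  filter_upwards [bound_tendsto.eventually_lt_const hε] with i hi C hC
  rw [dist_comm, dist_eq_norm]
  calc ‖⟪u i, C (u i)⟫_𝕜 - ⟪y, C y⟫_𝕜‖
      ≤ ‖C‖ * ((‖u i‖ + ‖y‖) * ‖u i - y‖) := by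
        simpa only [mul_assoc] using norm_inner_apply_self_sub_le C (u i) y
    _ ≤ (‖u i‖ + ‖y‖) * ‖u i - y‖ :=
        mul_le_of_le_one_left (by positivity) (mem_closedBall_zero_iff.mp hC)
    _ < ε := hi

theorem inner_apply_self_map_of_commute {V C : E →L[𝕜] E} (hV : ∀ x, ‖V x‖ = ‖x‖)
    (hVC : Commute V C) (x : E) : ⟪V x, C (V x)⟫_𝕜 = ⟪x, C x⟫_𝕜 := by
  have apply_comm : V (C x) = C (V x) := DFunLike.congr_fun hVC.eq x
  rw [← apply_comm, (LinearMap.norm_map_iff_inner_map_map V).mp hV]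

end VectorFunctional

/-- The vector `x` is cyclic for the set `N` of operators: the vectors `A x` with `A ∈ N` are dense.
The set is not assumed to be an algebra. -/
def IsCyclicVector {R E : Type*} [Semiring R] [AddCommMonoid E] [Module R E] [TopologicalSpace E]
    (N : Set (E →L[R] E)) (x : E) : Prop :=
  Dense {y : E | ∃ A ∈ N, y = A x}

namespace IsCyclicVector

theorem eq_of_commute_of_apply_eq {R E : Type*} [Semiring R] [AddCommMonoid E] [Module R E]
    [TopologicalSpace E] [T2Space E] {N : Set (E →L[R] E)} {x : E} (hx : IsCyclicVector N x)
    {S T : E →L[R] E} (hS : ∀ A ∈ N, Commute S A) (hT : ∀ A ∈ N, Commute T A) (hST : S x = T x) :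
    S = T := by
  refine DFunLike.coe_injective (S.continuous.ext_on hx T.continuous ?_)
  rintro _ ⟨A, hA, rfl⟩
  calc S (A x) = A (S x) := DFunLike.congr_fun (hS A hA).eq x
    _ = A (T x) := by rw [hST]
    _ = T (A x) := (DFunLike.congr_fun (hT A hA).eq x).symm

theorem exists_seq_tendsto_norm_eq {𝕜 E : Type*} [RCLike 𝕜] [NormedAddCommGroup E]
    [NormedSpace 𝕜 E] {N : Submodule 𝕜 (E →L[𝕜] E)} {x : E}
    (hx : IsCyclicVector (N : Set (E →L[𝕜] E)) x) (y : E) :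
    ∃ A : ℕ → E →L[𝕜] E, (∀ n, A n ∈ N) ∧ (∀ n, ‖A n x‖ = ‖y‖) ∧
      Tendsto (fun n => A n x) atTop (𝓝 y) := by
  let orbit : Submodule 𝕜 E := N.map (ContinuousLinearMap.apply 𝕜 E x).toLinearMap
  have orbit_dense : Dense (orbit : Set E) := by
    refine Dense.mono ?_ hx
    rintro _ ⟨A, hA, rfl⟩
    exact ⟨A, hA, rfl⟩
  obtain ⟨u, hu, hu_tendsto⟩ :=
    mem_closure_iff_seq_limit.mp (mem_closure_inter_sphere_norm (orbit_dense y))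
  choose A hAN hAu using fun n => (hu n).1
  obtain rfl : (fun n => A n x) = u := funext hAu
  exact ⟨A, hAN, fun n => mem_sphere_zero_iff_norm.mp (hu n).2, hu_tendsto⟩

theorem norm_inner_apply_lt_norm_mul_norm {𝕜 E : Type*} [RCLike 𝕜] [NormedAddCommGroup E]
    [InnerProductSpace 𝕜 E] {N : Set (E →L[𝕜] E)} {x : E} (hx : IsCyclicVector N x) (hx0 : x ≠ 0)
    {T : E →L[𝕜] E} (hT : ∀ A ∈ N, Commute T A) (hTns : ¬ ∃ c : 𝕜, T = c • (1 : E →L[𝕜] E)) :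
    ‖inner 𝕜 x (T x)‖ < ‖x‖ * ‖T x‖ := by
  refine (norm_inner_le_norm x (T x)).lt_of_ne fun cauchy_schwarz_eq => hTns ?_
  have eq_zero_or_smul : x = 0 ∨ ∃ c : 𝕜, T x = c • x :=
    ((norm_inner_eq_norm_tfae 𝕜 x (T x)).out 0 2).mp cauchy_schwarz_eq
  obtain ⟨c, hc⟩ := eq_zero_or_smul.resolve_left hx0
  exact ⟨c, hx.eq_of_commute_of_apply_eq hT (fun A _ => (Commute.one_left A).smul_left c) hc⟩

end IsCyclicVector

section Isometry

open scoped InnerProductSpace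

theorem stmt_7_general {𝕜 H : Type*} [RCLike 𝕜] [NormedAddCommGroup H] [InnerProductSpace 𝕜 H]
    (N : Submodule 𝕜 (H →L[𝕜] H)) (Ω : H) (hΩ : ‖Ω‖ = 1)
    (hcyc : IsCyclicVector (N : Set (H →L[𝕜] H)) Ω)
    (V : H →L[𝕜] H) (hV : ∀ x, ‖V x‖ = ‖x‖) (hVcomm : ∀ X ∈ N, Commute V X)
    (hVns : ¬ ∃ c : 𝕜, V = c • (1 : H →L[𝕜] H)) :
    ‖⟪Ω, V Ω⟫_𝕜‖ < 1 ∧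
    ∃ A : ℕ → (H →L[𝕜] H), (∀ m, A m ∈ N) ∧ (∀ m, ‖A m Ω‖ = 1) ∧
      (∀ ε : ℝ, 0 < ε → ∃ M : ℕ, ∀ m ≥ M, ∀ C ∈ N, ‖C‖ ≤ 1 →
        ‖⟪A m Ω, C (A m Ω)⟫_𝕜 - ⟪Ω, C Ω⟫_𝕜‖ ≤ ε) ∧
      Tendsto (fun m => ‖⟪Ω, A m Ω⟫_𝕜‖) atTop (𝓝 ‖⟪Ω, V Ω⟫_𝕜‖) := by
  have hVΩ : ‖V Ω‖ = 1 := (hV Ω).trans hΩ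
  have hΩ0 : Ω ≠ 0 := norm_ne_zero_iff.mp (hΩ ▸ one_ne_zero)
  obtain ⟨A, hAN, hA_norm, hA_tendsto⟩ := hcyc.exists_seq_tendsto_norm_eq (V Ω)
  have overlap_lt : ‖⟪Ω, V Ω⟫_𝕜‖ < 1 := by
    simpa only [hΩ, hVΩ, one_mul] using
      hcyc.norm_inner_apply_lt_norm_mul_norm hΩ0 hVcomm hVns
  have states_tendsto := Metric.tendstoUniformlyOn_iff.mp
    (tendstoUniformlyOn_inner_apply_self (𝕜 := 𝕜) hA_tendsto)
  refine ⟨overlap_lt, A, hAN, fun m => (hA_norm m).trans hVΩ, fun ε hε => ?_,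
    (tendsto_const_nhds.inner hA_tendsto).norm⟩
  obtain ⟨M, hM⟩ := eventually_atTop.mp (states_tendsto ε hε)
  refine ⟨M, fun m hm C hC hC1 => ?_⟩
  rw [← inner_apply_self_map_of_commute hV (hVcomm C hC) Ω, ← dist_eq_norm, dist_comm]
  exact (hM m hm C (mem_closedBall_zero_iff.mpr hC1)).le

end Isometry

/-- from the proof of Proposition 3.1(ii). If `Ω` is cyclic for a unital
*-subalgebra `N ⊆ B(H)` and `V` is a non-scalar unitary commuting with `N`, then
`|⟨Ω, VΩ⟩| < 1` and there are `A_m ∈ N` with `‖A_m Ω‖ = 1` such that `‖ω_{A_m} − ω‖ → 0`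
while `|⟨Ω, A_m Ω⟩| → |⟨Ω, VΩ⟩| < 1`. -/
theorem stmt_7 {H : Type*} [NormedAddCommGroup H] [InnerProductSpace ℂ H] [CompleteSpace H]
    (N : StarSubalgebra ℂ (H →L[ℂ] H))
    (Ω : H) (hΩ : ‖Ω‖ = 1)
    (hcyc : Dense {x : H | ∃ A ∈ N, x = A Ω})
    (V : H →L[ℂ] H) (hVu : V ∈ unitary (H →L[ℂ] H))
    (hVcomm : ∀ X ∈ N, V * X = X * V)
    (hVns : ¬ ∃ c : ℂ, V = c • (1 : H →L[ℂ] H)) :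
    ‖⟪Ω, V Ω⟫‖ < 1 ∧
    ∃ A : ℕ → (H →L[ℂ] H), (∀ m, A m ∈ N) ∧ (∀ m, ‖A m Ω‖ = 1) ∧
      -- `‖ω_{A_m} − ω‖ → 0` for the norm induced by `N`
      (∀ ε : ℝ, 0 < ε → ∃ M : ℕ, ∀ m ≥ M, ∀ C ∈ N, ‖C‖ ≤ 1 →
        ‖⟪A m Ω, C (A m Ω)⟫ - ⟪Ω, C Ω⟫‖ ≤ ε) ∧
      Tendsto (fun m => ‖⟪Ω, A m Ω⟫‖) atTop (𝓝 ‖⟪Ω, V Ω⟫‖) := by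
  exact stmt_7_general (Subalgebra.toSubmodule N.toSubalgebra) Ω hΩ hcyc V
    (V.norm_map_of_mem_unitary hVu) hVcomm hVns
end
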